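/- Let β ∈ F̃ with q(β) < 0, and suppose β = γ_1 + ⋯ + γ_r with r ≥ 2 and all γ_t ∈ L^+ ∖ {0}. Then q(β) < q(γ_1) + ⋯ + q(γ_r). -/

import Mathlib

open Polynomial Matrix BigOperators

namespace DS

noncomputable section

/-- The data of a collection of HTL normal forms `B⁽ⁱ⁾`, `i = 0,…,p`, on `ℂⁿ`:
block counts `m i`, pole orders `kk i`, block sizes `nn i j`, irregular parts
`q i j ∈ s²ℂ[s]` (pairwise distinct, degree ≤ kk i), residue blocks `R i j`,
chosen annihilating eigenvalue lists `ξ i j`, and an identification of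
`Σ j, Fin (nn i j)` with `Fin n` (the block decomposition of `ℂⁿ`). -/
structure Setup where
  p : ℕ
  n : ℕ
  hn : 0 < n
  m : Fin (p+1) → ℕ
  hm : ∀ i, 0 < m i
  kk : Fin (p+1) → ℕ
  hkk : ∀ i, 0 < kk i
  nn : ∀ i : Fin (p+1), Fin (m i) → ℕ
  q : ∀ i : Fin (p+1), Fin (m i) → Polynomial ℂ
  hq0 : ∀ i j, (q i j).coeff 0 = 0
  hq1 : ∀ i j, (q i j).coeff 1 = 0
  hqdeg : ∀ i j, (q i j).natDegree ≤ kk i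
  hqdist : ∀ i : Fin (p+1), ∀ j j' : Fin (m i), j ≠ j' → q i j ≠ q i j'
  e : ∀ i : Fin (p+1), Fin (m i) → ℕ
  he : ∀ i j, 0 < e i j
  xi : ∀ (i : Fin (p+1)) (j : Fin (m i)), Fin (e i j) → ℂ
  R : ∀ (i : Fin (p+1)) (j : Fin (m i)), Matrix (Fin (nn i j)) (Fin (nn i j)) ℂ
  hxi : ∀ i j, (((List.finRange (e i j)).map fun l => R i j - xi i j l • 1).prod) = 0
  emb : ∀ i : Fin (p+1), (Σ j : Fin (m i), Fin (nn i j)) ≃ Fin n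
  hreg : ∀ i : Fin (p+1), ¬ (1 < m i ∨ i = 0) → kk i = 1

/-- `i ∈ I_irr` : the indices of irregular singular points together with `0`. -/
def Iirr (S : Setup) (i : Fin (S.p+1)) : Prop := 1 < S.m i ∨ i = 0

instance (S : Setup) : DecidablePred (Iirr S) := fun i =>
  inferInstanceAs (Decidable (1 < S.m i ∨ i = 0))

/-- Vertices `[i,j]` for `i ∈ I_irr`. -/
abbrev Vb (S : Setup) := Σ i : {i : Fin (S.p+1) // Iirr S i}, Fin (S.m i.1)

/-- Vertices `[i,j,k]` for `0 ≤ i ≤ p`, `1 ≤ j ≤ m⁽ⁱ⁾`, `1 ≤ k ≤ e[i,j]-1`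
(the third component `κ` encodes `k = κ+1`). -/
abbrev Vr (S : Setup) := Σ i : Fin (S.p+1), Σ j : Fin (S.m i), Fin (S.e i j - 1)

/-- The vertex set `Q₀` of the quiver `Q`. -/
abbrev V (S : Setup) := Vb S ⊕ Vr S

/-- `d_i(j,j') = deg (q_j - q_j') - 2`. -/
def dcnt (S : Setup) (i : Fin (S.p+1)) (j j' : Fin (S.m i)) : ℕ :=
  (S.q i j - S.q i j').natDegree - 2

/-- The number of arrows of `Q` from a vertex `a` to a vertex `b`. -/
def arr (S : Setup) : V S → V S → ℕ
  | .inl ⟨i, j⟩, .inl ⟨i', j'⟩ =>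
      (if i.1 = 0 ∧ i'.1 ≠ 0 then 1 else 0) +
      (if h : i = i' then
        (if (j : ℕ) < (j' : ℕ) then dcnt S i.1 j (Fin.cast (by rw [h]) j') else 0)
       else 0)
  | .inl _, .inr _ => 0
  | .inr ⟨i, j, κ⟩, .inl ⟨i', j'⟩ =>
      (if i = i'.1 ∧ (j : ℕ) = (j' : ℕ) ∧ (κ : ℕ) = 0 then 1 else 0) +
      (if ¬ Iirr S i ∧ i'.1 = 0 ∧ (j : ℕ) = 0 ∧ (κ : ℕ) = 0 then 1 else 0)
  | .inr ⟨i, j, κ⟩, .inr ⟨i', j', κ'⟩ =>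
      if i = i' ∧ (j : ℕ) = (j' : ℕ) ∧ (κ : ℕ) = (κ' : ℕ) + 1 then 1 else 0

/-- The Euler form `⟨β,γ⟩` of the quiver `Q`. -/
def eform (S : Setup) (β γ : V S → ℤ) : ℤ :=
  (∑ a : V S, β a * γ a) - ∑ a : V S, ∑ b : V S, (arr S a b : ℤ) * β a * γ b

/-- The symmetrized bilinear form `(β,γ)`. -/
def bform (S : Setup) (β γ : V S → ℤ) : ℤ := eform S β γ + eform S γ β

/-- The quadratic form `q(β)`. -/
def qform (S : Setup) (β : V S → ℤ) : ℤ := eform S β β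

/-- `p(β) = 1 - q(β)`. -/
def pform (S : Setup) (β : V S → ℤ) : ℤ := 1 - qform S β

/-- The coordinate vector `ε_a`. -/
def eps (S : Setup) (a : V S) : V S → ℤ := fun b => if b = a then 1 else 0

/-- The fundamental reflection `s_a`. -/
def refl1 (S : Setup) (a : V S) (β : V S → ℤ) : V S → ℤ :=
  fun b => β b - bform S β (eps S a) * eps S a b

/-- Iterated fundamental reflections (a Weyl group element). -/
def reflList (S : Setup) (l : List (V S)) (β : V S → ℤ) : V S → ℤ :=
  l.foldr (refl1 S) β

/-- The support of a vector. -/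
def supp (S : Setup) (β : V S → ℤ) : Set (V S) := {a | β a ≠ 0}

/-- The support of `β` is connected in the underlying graph of `Q`. -/
def connSupp (S : Setup) (β : V S → ℤ) : Prop :=
  ∀ a ∈ supp S β, ∀ b ∈ supp S β,
    Relation.ReflTransGen
      (fun x y => (0 < arr S x y + arr S y x) ∧ x ∈ supp S β ∧ y ∈ supp S β) a b

/-- The fundamental set of the root system of `Q` (all vertices of `Q` are loop-free). -/
def fund (S : Setup) (β : V S → ℤ) : Prop :=
  β ≠ 0 ∧ (∀ a, 0 ≤ β a) ∧ connSupp S β ∧ ∀ a : V S, bform S β (eps S a) ≤ 0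

/-- Real roots of `Q`. -/
def isRealRoot (S : Setup) (β : V S → ℤ) : Prop :=
  ∃ (l : List (V S)) (a : V S), β = reflList S l (eps S a)

/-- Imaginary roots of `Q`. -/
def isImagRoot (S : Setup) (β : V S → ℤ) : Prop :=
  ∃ (l : List (V S)) (γ : V S → ℤ), (fund S γ ∨ fund S (-γ)) ∧ β = reflList S l γ

/-- Roots of `Q`. -/
def isRoot (S : Setup) (β : V S → ℤ) : Prop := isRealRoot S β ∨ isImagRoot S β

/-- Positive roots of `Q`. -/
def isPosRoot (S : Setup) (β : V S → ℤ) : Prop := isRoot S β ∧ ∀ a, 0 ≤ β a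

/-- The index `0` as an element of `I_irr`. -/
def i0 (S : Setup) : {i : Fin (S.p+1) // Iirr S i} := ⟨0, Or.inr rfl⟩

/-- The vertex `[0,j]`. -/
def v0 (S : Setup) (j : Fin (S.m 0)) : V S := Sum.inl ⟨i0 S, j⟩

/-- The vertex `[i,j]` for `i ∈ I_irr`. -/
def vI (S : Setup) (i : {i : Fin (S.p+1) // Iirr S i}) (j : Fin (S.m i.1)) : V S :=
  Sum.inl ⟨i, j⟩

/-- The lattice `L`: `Σ_j β_[0,j] = Σ_j β_[i,j]` for all `i ∈ I_irr ∖ {0}`. -/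
def inL (S : Setup) (β : V S → ℤ) : Prop :=
  ∀ i : {i : Fin (S.p+1) // Iirr S i}, i.1 ≠ 0 →
    (∑ j : Fin (S.m 0), β (v0 S j)) = ∑ j : Fin (S.m i.1), β (vI S i j)

/-- `L⁺ = L ∩ (ℤ≥0)^{Q₀}`. -/
def inLpos (S : Setup) (β : V S → ℤ) : Prop := inL S β ∧ ∀ a, 0 ≤ β a

/-- The dimension vector `α` (as natural numbers):
`α_[i,j] = n⁽ⁱ⁾_j`, `α_[i,j,k] = rank ∏_{l=1}^k (R⁽ⁱ⁾_j - ξ^{[i,j]}_l)`. -/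
noncomputable def alN (S : Setup) : V S → ℕ
  | .inl ⟨i, j⟩ => S.nn i.1 j
  | .inr ⟨i, j, κ⟩ =>
      ((((List.finRange (S.e i j)).take ((κ : ℕ) + 1)).map
          fun l => S.R i j - S.xi i j l • 1).prod).rank

/-- The dimension vector `α` as an integer vector. -/
noncomputable def alZ (S : Setup) : V S → ℤ := fun a => (alN S a : ℤ)

/-- The parameter `λ ∈ ℂ^{Q₀}`. -/
noncomputable def lam (S : Setup) : V S → ℂ
  | .inl ⟨i, j⟩ =>
      if h : i.1 = 0 then
        (- S.xi 0 (Fin.cast (by rw [h]) j) ⟨0, S.he 0 (Fin.cast (by rw [h]) j)⟩)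
          - ∑ i' ∈ Finset.univ.filter (fun i' : Fin (S.p+1) => ¬ Iirr S i'),
              S.xi i' ⟨0, S.hm i'⟩ ⟨0, S.he i' ⟨0, S.hm i'⟩⟩
      else - S.xi i.1 j ⟨0, S.he i.1 j⟩
  | .inr ⟨i, j, κ⟩ =>
      S.xi i j ⟨(κ : ℕ), by have := κ.2; omega⟩
        - S.xi i j ⟨(κ : ℕ) + 1, by have := κ.2; omega⟩

/-- Pairing `β · μ = Σ_a β_a μ_a` between `ℤ^{Q₀}` and `ℂ^{Q₀}`. -/
noncomputable def dotC (S : Setup) (β : V S → ℤ) (μ : V S → ℂ) : ℂ :=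
  ∑ a : V S, (β a : ℂ) * μ a

/-- `β ∈ R̃⁺_μ` : positive roots of `Q` lying in `L` with `β·μ = 0`. -/
def inRt (S : Setup) (μ : V S → ℂ) (β : V S → ℤ) : Prop :=
  isPosRoot S β ∧ inL S β ∧ dotC S β μ = 0

/-- `β ∈ ℕR̃⁺_μ` : finite sums (including `0`) of elements of `R̃⁺_μ`. -/
def inNRt (S : Setup) (μ : V S → ℂ) (β : V S → ℤ) : Prop :=
  ∃ (r : ℕ) (γ : Fin r → (V S → ℤ)), (∀ t, inRt S μ (γ t)) ∧ β = ∑ t, γ t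

/-- `β ∈ Σ̃_μ`. -/
def inSig (S : Setup) (μ : V S → ℂ) (β : V S → ℤ) : Prop :=
  inRt S μ β ∧ ∀ (r : ℕ), 2 ≤ r → ∀ γ : Fin r → (V S → ℤ),
    (∀ t, inRt S μ (γ t)) → β = ∑ t, γ t → (∑ t, pform S (γ t)) < pform S β

/-! ### The matrix side: truncated orbits.

An element `Σ_{j=1}^{k} A_j x^{-j}` of `𝔤_k*` is encoded as the polynomial matrix
`Σ_{j=1}^{k} A_j x^{k-j}` (of degree `< k`); the coadjoint `G_k`-action becomes
conjugation modulo `x^k` by polynomial matrices with invertible constant term. -/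

abbrev PMat (S : Setup) := Matrix (Fin S.n) (Fin S.n) (Polynomial ℂ)

/-- All entries have degree `< k`. -/
def degLT (S : Setup) (k : ℕ) (A : PMat S) : Prop :=
  ∀ a b, (A a b).degree < (k : ℕ)

/-- The HTL normal form `B⁽ⁱ⁾`, in the polynomial encoding. -/
noncomputable def Bmat (S : Setup) (i : Fin (S.p+1)) : PMat S :=
  Matrix.of fun a b =>
    if h : ((S.emb i).symm a).1 = ((S.emb i).symm b).1 then
      (if Fin.cast (by rw [h]) ((S.emb i).symm a).2 = ((S.emb i).symm b).2 then
          Polynomial.reflect (S.kk i) (S.q i ((S.emb i).symm b).1)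
        else 0)
        + Polynomial.C
            (S.R i ((S.emb i).symm b).1 (Fin.cast (by rw [h]) ((S.emb i).symm a).2)
              ((S.emb i).symm b).2)
          * Polynomial.X ^ (S.kk i - 1)
    else 0

/-- Membership in the truncated orbit `𝒪_{B⁽ⁱ⁾}`. -/
def inOrbit (S : Setup) (i : Fin (S.p+1)) (A : PMat S) : Prop :=
  degLT S (S.kk i) A ∧
  ∃ g : PMat S, IsUnit (g.map fun r => r.coeff 0) ∧
    ∀ a b, (Polynomial.X ^ (S.kk i) : Polynomial ℂ) ∣ (g * Bmat S i - A * g) a b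

/-- The residue matrix `A⁽ⁱ⁾₁`. -/
def resMat (S : Setup) (i : Fin (S.p+1)) (A : PMat S) : Matrix (Fin S.n) (Fin S.n) ℂ :=
  Matrix.of fun a b => (A a b).coeff (S.kk i - 1)

/-- `(A⁽ⁱ⁾)_{0≤i≤p} ∈ ∏ 𝒪_{B⁽ⁱ⁾}` with `Σ A⁽ⁱ⁾₁ = 0`. -/
def isDSElem (S : Setup) (A : ∀ _ : Fin (S.p+1), PMat S) : Prop :=
  (∀ i, inOrbit S i (A i)) ∧ (∑ i, resMat S i (A i)) = 0

/-- Irreducibility of the collection of all coefficient matrices `A⁽ⁱ⁾_j`. -/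
def irredTuple (S : Setup) (A : ∀ _ : Fin (S.p+1), PMat S) : Prop :=
  ∀ W : Submodule ℂ (Fin S.n → ℂ),
    (∀ (i : Fin (S.p+1)) (l : ℕ), ∀ v ∈ W,
        (Matrix.of fun a b => (A i a b).coeff l).mulVec v ∈ W) →
    W = ⊥ ∨ W = ⊤

/-! ### Representations of the double quiver -/

/-- A representation of the double quiver `Q̄` with dimension vector `β`:
`f a b ρ` is the matrix of `ψ_ρ : ℂ^{β a} → ℂ^{β b}` and `g a b ρ` the matrix of
`ψ_{ρ*} : ℂ^{β b} → ℂ^{β a}`, for the `ρ`-th arrow `a → b` of `Q`. -/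
structure Rep (S : Setup) (β : V S → ℕ) where
  f : ∀ a b : V S, Fin (arr S a b) → Matrix (Fin (β b)) (Fin (β a)) ℂ
  g : ∀ a b : V S, Fin (arr S a b) → Matrix (Fin (β a)) (Fin (β b)) ℂ

/-- The moment map at a vertex `c`. -/
noncomputable def moment (S : Setup) {β : V S → ℕ} (M : Rep S β) (c : V S) :
    Matrix (Fin (β c)) (Fin (β c)) ℂ :=
  (∑ a : V S, ∑ ρ : Fin (arr S a c), M.f a c ρ * M.g a c ρ)
    - ∑ b : V S, ∑ ρ : Fin (arr S c b), M.g c b ρ * M.f c b ρ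

/-- `M ∈ Rep(Q̄,β)_μ`. -/
def onMu (S : Setup) {β : V S → ℕ} (μ : V S → ℂ) (M : Rep S β) : Prop :=
  ∀ c : V S, moment S M c = μ c • (1 : Matrix (Fin (β c)) (Fin (β c)) ℂ)

/-- The block matrix `(ψ_{ρ^{[0,j]}_{[i,j']}})_{j,j'}` for `i ∈ I_irr ∖ {0}`. -/
noncomputable def crossMat (S : Setup) {β : V S → ℕ} (M : Rep S β)
    (i : {i : Fin (S.p+1) // Iirr S i}) :
    Matrix (Σ j' : Fin (S.m i.1), Fin (β (vI S i j'))) (Σ j : Fin (S.m 0), Fin (β (v0 S j))) ℂ :=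
  Matrix.of fun x y =>
    if h : 0 < arr S (v0 S y.1) (vI S i x.1) then
      M.f (v0 S y.1) (vI S i x.1) ⟨0, h⟩ x.2 y.2
    else 0

/-- All the block matrices `(ψ_{ρ^{[0,j]}_{[i,j']}})` for `i ∈ I_irr ∖ {0}` are invertible. -/
def crossBij (S : Setup) {β : V S → ℕ} (M : Rep S β) : Prop :=
  ∀ i : {i : Fin (S.p+1) // Iirr S i}, i.1 ≠ 0 →
    Function.Bijective ((crossMat S M i).mulVec)

/-- The combined map `(ψ_{ρ^{[i,1,1]}_{[0,j]}})_j : ℂ^{β [i,1,1]} → ⊕_j ℂ^{β [0,j]}`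
(for `i ∈ I_reg`). -/
noncomputable def regMatF (S : Setup) {β : V S → ℕ} (M : Rep S β)
    (i : Fin (S.p+1)) (j : Fin (S.m i)) (κ : Fin (S.e i j - 1)) :
    Matrix (Σ j' : Fin (S.m 0), Fin (β (v0 S j'))) (Fin (β (Sum.inr ⟨i, j, κ⟩))) ℂ :=
  Matrix.of fun x y =>
    if h : 0 < arr S (Sum.inr ⟨i, j, κ⟩) (v0 S x.1) then
      M.f (Sum.inr ⟨i, j, κ⟩) (v0 S x.1) ⟨0, h⟩ x.2 y
    else 0

/-- The combined map `(ψ_{(ρ^{[i,1,1]}_{[0,j]})*})_j : ⊕_j ℂ^{β [0,j]} → ℂ^{β [i,1,1]}`. -/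
noncomputable def regMatG (S : Setup) {β : V S → ℕ} (M : Rep S β)
    (i : Fin (S.p+1)) (j : Fin (S.m i)) (κ : Fin (S.e i j - 1)) :
    Matrix (Fin (β (Sum.inr ⟨i, j, κ⟩))) (Σ j' : Fin (S.m 0), Fin (β (v0 S j'))) ℂ :=
  Matrix.of fun y x =>
    if h : 0 < arr S (Sum.inr ⟨i, j, κ⟩) (v0 S x.1) then
      M.g (Sum.inr ⟨i, j, κ⟩) (v0 S x.1) ⟨0, h⟩ y x.2
    else 0

/-- `M ∈ Rep(Q̄,β)_μ^{dif}` (the open conditions). -/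
def difCond (S : Setup) {β : V S → ℕ} (M : Rep S β) : Prop :=
  crossBij S M ∧
  (∀ (i : Fin (S.p+1)), ¬ Iirr S i → ∀ (j : Fin (S.m i)) (κ : Fin (S.e i j - 1)),
      (κ : ℕ) = 0 →
      Function.Injective ((regMatF S M i j κ).mulVec) ∧
      Function.Surjective ((regMatG S M i j κ).mulVec)) ∧
  (∀ (i : Fin (S.p+1)) (j : Fin (S.m i)) (κ : Fin (S.e i j - 1)) (b : V S)
      (ρ : Fin (arr S (Sum.inr ⟨i, j, κ⟩) b)),
      (¬ Iirr S i ∧ (κ : ℕ) = 0) ∨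
      (Function.Injective ((M.f (Sum.inr ⟨i, j, κ⟩) b ρ).mulVec) ∧
       Function.Surjective ((M.g (Sum.inr ⟨i, j, κ⟩) b ρ).mulVec)))

/-- A family of subspaces forming a subrepresentation of `M`. -/
def isSubrep (S : Setup) {β : V S → ℕ} (M : Rep S β)
    (W : ∀ a : V S, Submodule ℂ (Fin (β a) → ℂ)) : Prop :=
  ∀ (a b : V S) (ρ : Fin (arr S a b)),
    (∀ v ∈ W a, (M.f a b ρ).mulVec v ∈ W b) ∧ (∀ v ∈ W b, (M.g a b ρ).mulVec v ∈ W a)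

/-- Irreducibility of a representation. -/
def irredRep (S : Setup) {β : V S → ℕ} (M : Rep S β) : Prop :=
  ∀ W, isSubrep S M W → (∀ a, W a = ⊥) ∨ (∀ a, W a = ⊤)

/-- A dimension vector is balanced if `Σ_j γ_[0,j] = Σ_j γ_[i,j]` for all `i ∈ I_irr∖{0}`. -/
def balanced (S : Setup) (γ : V S → ℕ) : Prop :=
  ∀ i : {i : Fin (S.p+1) // Iirr S i}, i.1 ≠ 0 →
    (∑ j : Fin (S.m 0), γ (v0 S j)) = ∑ j : Fin (S.m i.1), γ (vI S i j)

/-- Quasi-irreducibility: no nontrivial proper subrepresentation with balanced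
dimension vector. -/
def quasiIrred (S : Setup) {β : V S → ℕ} (M : Rep S β) : Prop :=
  ∀ W, isSubrep S M W → balanced S (fun a => Module.finrank ℂ (W a)) →
    (∀ a, W a = ⊥) ∨ (∀ a, W a = ⊤)

/-- Simultaneous conjugation of representations by `∏_a GL(β_a, ℂ)`. -/
def repConj (S : Setup) {β : V S → ℕ} (M N : Rep S β) : Prop :=
  ∃ g : ∀ a : V S, (Matrix (Fin (β a)) (Fin (β a)) ℂ)ˣ,
    (∀ a b ρ, N.f a b ρ = ((g b).val * M.f a b ρ) * ((g a)⁻¹).val) ∧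
    (∀ a b ρ, N.g a b ρ = ((g a).val * M.g a b ρ) * ((g b)⁻¹).val)

/-- Simultaneous conjugation of tuples by `GL(n, ℂ)`. -/
def tupConj (S : Setup) (A A' : ∀ _ : Fin (S.p+1), PMat S) : Prop :=
  ∃ g : (Matrix (Fin S.n) (Fin S.n) ℂ)ˣ,
    ∀ i, A' i = (g.val.map Polynomial.C) * A i * ((g⁻¹).val.map Polynomial.C)

/-- Carrier of the moduli space `ℳ*_{st}(𝐁)`. -/
abbrev MstC (S : Setup) := {A : ∀ _ : Fin (S.p+1), PMat S // isDSElem S A ∧ irredTuple S A}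

/-- The moduli space `ℳ*_{st}(𝐁)` of stable connections, identified with conjugacy
classes of irreducible elements of `∏ 𝒪_{B⁽ⁱ⁾}` with vanishing residue sum. -/
abbrev Mst (S : Setup) := Quot (fun A A' : MstC S => tupConj S A.1 A'.1)

abbrev DSC (S : Setup) := {A : ∀ _ : Fin (S.p+1), PMat S // isDSElem S A}

abbrev DSQ (S : Setup) := Quot (fun A A' : DSC S => tupConj S A.1 A'.1)

abbrev RepIrrC (S : Setup) (μ : V S → ℂ) :=
  {M : Rep S (alN S) // onMu S μ M ∧ irredRep S M}

/-- The quiver variety `𝔐^{reg}_μ(Q,α)`. -/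
abbrev Mreg (S : Setup) (μ : V S → ℂ) :=
  Quot (fun M N : RepIrrC S μ => repConj S M.1 N.1)

abbrev DifC (S : Setup) (μ : V S → ℂ) :=
  {M : Rep S (alN S) // onMu S μ M ∧ difCond S M}

abbrev DifQ (S : Setup) (μ : V S → ℂ) :=
  Quot (fun M N : DifC S μ => repConj S M.1 N.1)

abbrev QIC (S : Setup) (μ : V S → ℂ) :=
  {M : Rep S (alN S) // onMu S μ M ∧ quasiIrred S M ∧ crossBij S M}

abbrev QIQ (S : Setup) (μ : V S → ℂ) :=
  Quot (fun M N : QIC S μ => repConj S M.1 N.1)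

/-! ### `J`, `ε_𝐢`, and the equivalence relation `∼` -/

/-- `ε_𝐢 = Σ_{i ∈ I_irr} ε_{[i,j_i]}` for `𝐢 = ([i,j_i]) ∈ 𝒥`. -/
def epsJ (S : Setup) (I : ∀ i : Fin (S.p+1), Fin (S.m i)) : V S → ℤ
  | .inl ⟨i, j⟩ => if (j : ℕ) = (I i.1 : ℕ) then 1 else 0
  | .inr _ => 0

/-- The reflection `s_𝐢`. -/
def sJ (S : Setup) (I : ∀ i : Fin (S.p+1), Fin (S.m i)) (β : V S → ℤ) : V S → ℤ :=
  fun b => β b - bform S β (epsJ S I) * epsJ S I b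

/-- The quasi-fundamental set `F̃`. -/
def quasiFund (S : Setup) (β : V S → ℤ) : Prop :=
  inL S β ∧ (∀ a, 0 ≤ β a) ∧ β ≠ 0 ∧
  (∀ I : ∀ i : Fin (S.p+1), Fin (S.m i), bform S β (epsJ S I) ≤ 0) ∧
  (∀ (i : Fin (S.p+1)) (j : Fin (S.m i)) (κ : Fin (S.e i j - 1)),
      bform S β (eps S (Sum.inr ⟨i, j, κ⟩)) ≤ 0) ∧
  connSupp S β

/-- `μ_𝐢 = Σ_{i ∈ I_irr} μ_{[i,j_i]}`. -/
noncomputable def muJ (S : Setup) (I : ∀ i : Fin (S.p+1), Fin (S.m i)) (μ : V S → ℂ) : ℂ :=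
  ∑ i : {i : Fin (S.p+1) // Iirr S i}, μ (vI S i (I i.1))

/-- The transformed parameter `μ'` in the move `s_𝐢` on pairs. -/
noncomputable def muMove (S : Setup) (I : ∀ i : Fin (S.p+1), Fin (S.m i)) (μ : V S → ℂ) :
    V S → ℂ := fun a =>
  match a with
  | .inl ⟨i, j⟩ =>
      if i.1 = 0 ∧ (j : ℕ) = (I 0 : ℕ) then μ a - 2 * muJ S I μ else μ a
  | .inr ⟨i, j, κ⟩ =>
      if j = I i ∧ (κ : ℕ) = 0 then μ a + muJ S I μ else μ a

/-- The reflected parameter `r_a(μ)` for a vertex `a`. -/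
noncomputable def rvtx (S : Setup) (a : V S) (μ : V S → ℂ) : V S → ℂ :=
  fun b => μ b - ((bform S (eps S a) (eps S b) : ℤ) : ℂ) * μ a

/-- One move generating the relation `∼` on pairs `(β,μ)`. -/
def stepRel (S : Setup) :
    ((V S → ℤ) × (V S → ℂ)) → ((V S → ℤ) × (V S → ℂ)) → Prop := fun x y =>
  (∃ (i : Fin (S.p+1)) (j : Fin (S.m i)) (κ : Fin (S.e i j - 1)),
      x.2 (Sum.inr ⟨i, j, κ⟩) ≠ 0 ∧
      y = (refl1 S (Sum.inr ⟨i, j, κ⟩) x.1, rvtx S (Sum.inr ⟨i, j, κ⟩) x.2)) ∨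
  (∃ I : ∀ i : Fin (S.p+1), Fin (S.m i),
      muJ S I x.2 ≠ 0 ∧ y = (sJ S I x.1, muMove S I x.2))

/-- The smallest equivalence relation `∼` containing all the moves. -/
def pairEquiv (S : Setup) :
    ((V S → ℤ) × (V S → ℂ)) → ((V S → ℤ) × (V S → ℂ)) → Prop :=
  Relation.EqvGen (stepRel S)

/-- The vector `z^{(i₀)}` for `i₀ ∈ I_irr ∖ {0}`. -/
def zvec (S : Setup) (i' : Fin (S.p+1)) : V S → ℂ
  | .inl ⟨i, _⟩ => if i.1 = i' then 1 else if i.1 = 0 then -1 else 0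
  | .inr _ => 0

/-! ### Proof -/

theorem kac_identity {A : Type*} [Fintype A] (w : A → A → ℝ) (hw : ∀ a b, w a b = w b a)
    (β f : A → ℝ) :
    ∑ a, (2 * (β a * f a) - ∑ b, w a b * (β b * f b)) * (β a * (1 - f a)) =
      ∑ a, (2 * β a - ∑ b, w a b * β b) * (β a * (f a * (1 - f a)))
        - (∑ a, ∑ b, w a b * (β a * β b) * (f a - f b) ^ 2) / 2 := by
  have h1 : ∑ a, ∑ b, w a b * (β b * f b) * (β a * (1 - f a)) =
      ∑ a, ∑ b, w a b * (β a * f a) * (β b * (1 - f b)) := by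
    rw [Finset.sum_comm]
    refine Finset.sum_congr rfl fun a _ => Finset.sum_congr rfl fun b _ => ?_
    rw [hw]
  have h2 : ∑ a, ∑ b, w a b * β b * (β a * (f a * (1 - f a))) =
      ∑ a, ∑ b, w a b * β a * (β b * (f b * (1 - f b))) := by
    rw [Finset.sum_comm]
    refine Finset.sum_congr rfl fun a _ => Finset.sum_congr rfl fun b _ => ?_
    rw [hw]
  have h3 : ∑ a, ∑ b, w a b * (β b * f b) * (β a * (1 - f a))
      + ∑ a, ∑ b, w a b * (β a * f a) * (β b * (1 - f b))
      = ∑ a, ∑ b, w a b * β b * (β a * (f a * (1 - f a)))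
      + ∑ a, ∑ b, w a b * β a * (β b * (f b * (1 - f b)))
      + ∑ a, ∑ b, w a b * (β a * β b) * (f a - f b) ^ 2 := by
    simp only [← Finset.sum_add_distrib]
    refine Finset.sum_congr rfl fun a _ => Finset.sum_congr rfl fun b _ => ?_
    ring
  have h4 : ∀ g : A → A → ℝ, ∀ u v : A → ℝ, ∑ a, (u a - ∑ b, g a b) * v a =
      ∑ a, u a * v a - ∑ a, ∑ b, g a b * v a := by
    intro g u v
    rw [← Finset.sum_sub_distrib]
    refine Finset.sum_congr rfl fun a _ => ?_
    rw [sub_mul, Finset.sum_mul]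
  rw [h4, h4]
  have h5 : ∑ a, 2 * (β a * f a) * (β a * (1 - f a)) =
      ∑ a, 2 * β a * (β a * (f a * (1 - f a))) :=
    Finset.sum_congr rfl fun a _ => by ring
  rw [h5]
  linarith

theorem cs_identity {A : Type*} [Fintype A] (β f : A → ℝ) :
    (∑ a, β a) * ∑ a, β a * (f a * (1 - f a)) =
      (∑ a, β a * f a) * (∑ a, β a * (1 - f a))
        - (∑ a, ∑ b, (β a * β b) * (f a - f b) ^ 2) / 2 := by
  have h1 : ∑ a, ∑ b, β a * (β b * (f b * (1 - f b))) =
      ∑ a, ∑ b, β b * (β a * (f a * (1 - f a))) := Finset.sum_comm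
  have h2 : ∑ a, ∑ b, (β a * f a) * (β b * (1 - f b)) =
      ∑ a, ∑ b, (β b * f b) * (β a * (1 - f a)) := Finset.sum_comm
  have h3 : ∑ a, ∑ b, β a * (β b * (f b * (1 - f b))) +
      ∑ a, ∑ b, β b * (β a * (f a * (1 - f a))) +
      ∑ a, ∑ b, (β a * β b) * (f a - f b) ^ 2 =
      ∑ a, ∑ b, (β a * f a) * (β b * (1 - f b)) +
      ∑ a, ∑ b, (β b * f b) * (β a * (1 - f a)) := by
    simp only [← Finset.sum_add_distrib]
    refine Finset.sum_congr rfl fun a _ => Finset.sum_congr rfl fun b _ => ?_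
    ring
  rw [Finset.sum_mul_sum, Finset.sum_mul_sum]
  linarith

/-- The cross arrows `[0,j] → [i,j']`, `i ≠ 0`. -/
def cr (S : Setup) : V S → V S → ℕ
  | .inl ⟨i, _⟩, .inl ⟨i', _⟩ => if i.1 = 0 ∧ i'.1 ≠ 0 then 1 else 0
  | .inl _, .inr _ => 0
  | .inr _, _ => 0

theorem cr_le (S : Setup) (a b : V S) : cr S a b ≤ arr S a b := by
  rcases a with ⟨i, j⟩ | ⟨i, j, k⟩ <;> rcases b with ⟨i', j'⟩ | ⟨i', j', k'⟩ <;> simp [cr, arr]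

/-- Symmetrized number of non-cross edges. -/
def ww (S : Setup) (a b : V S) : ℝ :=
  ((arr S a b : ℝ) - cr S a b) + ((arr S b a : ℝ) - cr S b a)

theorem ww_symm (S : Setup) (a b : V S) : ww S a b = ww S b a := by
  unfold ww; ring

theorem ww_nonneg (S : Setup) (a b : V S) : 0 ≤ ww S a b := by
  have h1 : (cr S a b : ℝ) ≤ arr S a b := by exact_mod_cast cr_le S a b
  have h2 : (cr S b a : ℝ) ≤ arr S b a := by exact_mod_cast cr_le S b a
  unfold ww; linarith

def NN (S : Setup) (i : {i : Fin (S.p+1) // Iirr S i}) (x : V S → ℝ) : ℝ :=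
  ∑ j, x (vI S i j)

def cc (S : Setup) (x : V S → ℝ) (a : V S) : ℝ := 2 * x a - ∑ b, ww S a b * x b

def kI (S : Setup) : ℝ := ∑ i : {i : Fin (S.p+1) // Iirr S i}, if i.1 ≠ 0 then (1:ℝ) else 0

def toR (S : Setup) (x : V S → ℤ) : V S → ℝ := fun a => (x a : ℝ)

theorem NN_of_inL (S : Setup) (x : V S → ℤ) (hx : inL S x)
    (i : {i : Fin (S.p+1) // Iirr S i}) : NN S i (toR S x) = NN S (i0 S) (toR S x) := by
  by_cases h : i.1 = 0
  · have : i = i0 S := Subtype.ext h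
    rw [this]
  · have := hx i h
    have h2 : ((∑ j : Fin (S.m 0), x (v0 S j) : ℤ) : ℝ)
      = ((∑ j : Fin (S.m i.1), x (vI S i j) : ℤ) : ℝ) := by rw [this]
    push_cast at h2
    exact h2.symm

theorem cross_sum (S : Setup) (x y : V S → ℤ) (hy : inL S y) :
    ∑ a, ∑ b, (cr S a b : ℝ) * toR S x a * toR S y b =
      kI S * NN S (i0 S) (toR S x) * NN S (i0 S) (toR S y) := by
  have h1 : ∑ a, ∑ b, (cr S a b : ℝ) * toR S x a * toR S y b =
      ∑ i : {i : Fin (S.p+1) // Iirr S i}, ∑ i' : {i : Fin (S.p+1) // Iirr S i},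
        (if i.1 = 0 ∧ i'.1 ≠ 0 then (1:ℝ) else 0) * NN S i (toR S x) * NN S i' (toR S y) := by
    simp only [Fintype.sum_sum_type, Fintype.sum_sigma, cr, NN]
    simp only [Nat.cast_zero, zero_mul, Finset.sum_const_zero, add_zero]
    refine Finset.sum_congr rfl fun i _ => ?_
    rw [Finset.sum_comm]
    refine Finset.sum_congr rfl fun i' _ => ?_
    rw [mul_assoc, Finset.sum_mul_sum, Finset.mul_sum]
    refine Finset.sum_congr rfl fun j _ => ?_
    rw [Finset.mul_sum]
    refine Finset.sum_congr rfl fun j' _ => ?_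
    simp only [vI]
    push_cast
    ring
  rw [h1, Finset.sum_eq_single (i0 S)]
  · unfold kI
    rw [Finset.sum_mul, Finset.sum_mul]
    refine Finset.sum_congr rfl fun i' _ => ?_
    rw [NN_of_inL S y hy i']
    have : (i0 S).1 = 0 := rfl
    simp only [this, true_and]
  · intro i _ hi
    have : i.1 ≠ 0 := fun h => hi (Subtype.ext h)
    simp [this]
  · simp

theorem bform_L (S : Setup) (x y : V S → ℤ) (hx : inL S x) (hy : inL S y) :
    (bform S x y : ℝ) = ∑ a, cc S (toR S x) a * toR S y a
      - 2 * kI S * NN S (i0 S) (toR S x) * NN S (i0 S) (toR S y) := by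
  have h1 := cross_sum S x y hy
  have h2 := cross_sum S y x hx
  have h3 : ∑ a, ∑ b, (arr S a b : ℝ) * toR S y a * toR S x b =
      ∑ a, ∑ b, (arr S b a : ℝ) * toR S y b * toR S x a := Finset.sum_comm
  have h4 : ∑ a, ∑ b, (cr S a b : ℝ) * toR S y a * toR S x b =
      ∑ a, ∑ b, (cr S b a : ℝ) * toR S y b * toR S x a := Finset.sum_comm
  have h5 : ∑ a, ∑ b, (ww S b a) * toR S x a * toR S y b =
      ∑ a, ∑ b, (ww S a b) * toR S x b * toR S y a := Finset.sum_comm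
  have h6 : ∑ a, ∑ b, (ww S b a) * toR S x a * toR S y b =
      ∑ a, ∑ b, (arr S a b : ℝ) * toR S x a * toR S y b
      + ∑ a, ∑ b, (arr S b a : ℝ) * toR S y b * toR S x a
      - ∑ a, ∑ b, (cr S a b : ℝ) * toR S x a * toR S y b
      - ∑ a, ∑ b, (cr S b a : ℝ) * toR S y b * toR S x a := by
    simp only [← Finset.sum_add_distrib, ← Finset.sum_sub_distrib]
    refine Finset.sum_congr rfl fun a _ => Finset.sum_congr rfl fun b _ => ?_
    unfold ww; ring
  have h7 : ∑ a, cc S (toR S x) a * toR S y a =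
      2 * ∑ a, toR S x a * toR S y a - ∑ a, ∑ b, (ww S a b) * toR S x b * toR S y a := by
    rw [Finset.mul_sum, ← Finset.sum_sub_distrib]
    refine Finset.sum_congr rfl fun a _ => ?_
    unfold cc
    rw [sub_mul, Finset.sum_mul]; ring
  have h8 : (bform S x y : ℝ) = 2 * ∑ a, toR S x a * toR S y a
      - ∑ a, ∑ b, (arr S a b : ℝ) * toR S x a * toR S y b
      - ∑ a, ∑ b, (arr S a b : ℝ) * toR S y a * toR S x b := by
    have : ∑ a, toR S y a * toR S x a = ∑ a, toR S x a * toR S y a :=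
      Finset.sum_congr rfl fun a _ => mul_comm _ _
    unfold bform eform
    push_cast
    change (∑ a, toR S x a * toR S y a - ∑ a, ∑ b, (arr S a b : ℝ) * toR S x a * toR S y b) +
      (∑ a, toR S y a * toR S x a - ∑ a, ∑ b, (arr S a b : ℝ) * toR S y a * toR S x b) = _
    rw [this]; ring
  rw [h8, h7]
  linarith

/-- The level of a vertex. -/
def level (S : Setup) : V S → Fin (S.p+1)
  | .inl ⟨i, _⟩ => i.1
  | .inr ⟨i, _, _⟩ => if Iirr S i then i else 0

/-- Edges at leg vertices are non-cross edges and preserve levels. -/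
theorem leg_edge (S : Setup) (v : Vr S) (b : V S)
    (h : 0 < arr S (.inr v) b + arr S b (.inr v)) :
    0 < ww S (.inr v) b ∧ level S (.inr v) = level S b := by
  constructor
  · have h1 : cr S (.inr v) b = 0 := rfl
    have h2 : cr S b (.inr v) = 0 := by rcases b with b | b <;> rfl
    unfold ww
    rw [h1, h2]
    have : (0:ℝ) < (arr S (.inr v) b : ℝ) + arr S b (.inr v) := by exact_mod_cast h
    simpa using this
  · obtain ⟨i, j, k⟩ := v
    rcases b with ⟨i', j'⟩ | ⟨i', j', k'⟩
    · simp only [arr, level] at h ⊢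
      by_cases h1 : i = i'.1
      · rw [if_pos (h1 ▸ i'.2)]; exact h1
      · by_cases h2 : ¬ Iirr S i ∧ i'.1 = 0 ∧ (j : ℕ) = 0 ∧ (k : ℕ) = 0
        · rw [if_neg h2.1, h2.2.1]
        · rw [if_neg h2, if_neg (fun h3 => h1 h3.1)] at h
          simp at h
    · simp only [arr, level] at h ⊢
      by_cases h1 : i = i'
      · rw [h1]
      · have h1' : ¬ i' = i := fun h => h1 h.symm
        simp [h1, h1'] at h

theorem dcnt_comm (S : Setup) (i : Fin (S.p+1)) (j j' : Fin (S.m i)) :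
    dcnt S i j j' = dcnt S i j' j := by
  unfold dcnt
  rw [← neg_sub, Polynomial.natDegree_neg]

theorem ww_level (S : Setup) (i : {i : Fin (S.p+1) // Iirr S i}) (j j' : Fin (S.m i.1))
    (hne : j ≠ j') : ww S (vI S i j) (vI S i j') = dcnt S i.1 j j' := by
  have h0 : ¬ (i.1 = 0 ∧ i.1 ≠ 0) := fun h => h.2 h.1
  have hne' : (j : ℕ) ≠ j' := fun h => hne (Fin.ext h)
  simp only [ww, vI, arr, cr, if_neg h0, dif_pos, Fin.cast_eq_self]
  rw [dcnt_comm S i.1 j' j]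
  rcases lt_or_gt_of_ne hne' with h | h
  · rw [if_pos h, if_neg h.not_gt]; simp
  · rw [if_pos h, if_neg h.not_gt]; simp

theorem ww_level_ne (S : Setup) (i i' : {i : Fin (S.p+1) // Iirr S i}) (hne : i ≠ i')
    (j : Fin (S.m i.1)) (j' : Fin (S.m i'.1)) : ww S (vI S i j) (vI S i' j') = 0 := by
  simp [ww, vI, arr, cr, hne, hne.symm]

theorem ww_self (S : Setup) (i : {i : Fin (S.p+1) // Iirr S i}) (j : Fin (S.m i.1)) :
    ww S (vI S i j) (vI S i j) = 0 := by
  simp [ww, vI, arr, cr]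

theorem ultra (S : Setup) (i : Fin (S.p+1)) (j j' l : Fin (S.m i)) (h : 0 < dcnt S i j j') :
    0 < dcnt S i j l ∨ 0 < dcnt S i l j' := by
  unfold dcnt at *
  have h1 := Polynomial.natDegree_add_le (S.q i j - S.q i l) (S.q i l - S.q i j')
  rw [sub_add_sub_cancel] at h1
  rcases le_max_iff.1 h1 with h2 | h2
  · left; omega
  · right; omega

/-- The vertices along the leg starting at `[i,j]`. -/
def legV (S : Setup) (i : {i : Fin (S.p+1) // Iirr S i}) (j : Fin (S.m i.1)) : ℕ → Option (V S)
  | 0 => some (vI S i j)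
  | k+1 => if h : k < S.e i.1 j - 1 then some (.inr ⟨i.1, j, ⟨k, h⟩⟩) else none

theorem sum_option {A : Type*} [Fintype A] [DecidableEq A] (b : A → ℝ) (o : Option A) :
    ∑ a, (if some a = o then b a else 0) = o.elim 0 b := by
  rcases o with _ | o <;> simp

theorem sum_le_two {A : Type*} [Fintype A] [DecidableEq A] (b g : A → ℝ) (hb : ∀ a, 0 ≤ b a)
    (o o' : Option A)
    (h : ∀ a, g a ≠ 0 → g a ≤ b a ∧ (some a = o ∨ some a = o')) :
    ∑ a, g a ≤ o.elim 0 b + o'.elim 0 b := by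
  rw [← sum_option, ← sum_option, ← Finset.sum_add_distrib]
  refine Finset.sum_le_sum fun a _ => ?_
  by_cases h0 : g a = 0
  · rw [h0]
    have := hb a
    split_ifs <;> linarith
  · obtain ⟨h1, h2⟩ := h a h0
    have := hb a
    rcases h2 with h2 | h2
    · rw [if_pos h2]; split_ifs <;> linarith
    · rw [if_pos h2]; split_ifs <;> linarith

theorem leg_contra (S : Setup) (b : V S → ℝ) (hb : ∀ a, 0 ≤ b a)
    (hleg : ∀ v : Vr S, cc S b (.inr v) ≤ 0)
    (i : {i : Fin (S.p+1) // Iirr S i}) (j : Fin (S.m i.1)) (hpos : 0 < b (vI S i j))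
    (hc : cc S b (vI S i j) ≤ 0)
    (hd : ∀ j', 0 < dcnt S i.1 j j' → b (vI S i j') = 0)
    (hr : i.1 = 0 → ∀ v : Vr S, ¬ Iirr S v.1 → (v.2.2 : ℕ) = 0 → b (.inr v) = 0) : False := by
  classical
  set B : ℕ → ℝ := fun k => (legV S i j k).elim 0 b with hB
  have hBn : ∀ k, 0 ≤ B k := by
    intro k
    simp only [hB]
    rcases legV S i j k with _ | a
    · simp
    · exact hb a
  have h0 : 2 * B 0 ≤ B 1 := by
    have key : ∑ a, ww S (vI S i j) a * b a ≤
        (legV S i j 1).elim 0 b + (none : Option (V S)).elim 0 b := by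
      refine sum_le_two b _ hb _ _ ?_
      intro a ha
      rcases a with ⟨i', j'⟩ | ⟨i', j', k'⟩
      · exfalso
        apply ha
        by_cases hi : i = i'
        · subst hi
          by_cases hj : j = j'
          · subst hj
            have := ww_self S i j
            rw [vI] at this
            simp [vI, this]
          · have h1 := ww_level S i j j' hj
            rcases Nat.eq_zero_or_pos (dcnt S i.1 j j') with h2 | h2
            · rw [h2] at h1
              simp only [vI] at h1 ⊢
              simp [h1]
            · have h3 := hd j' h2
              simp only [vI] at h3 ⊢
              simp [h3]
        · have h1 := ww_level_ne S i i' hi j j'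
          simp only [vI] at h1 ⊢
          simp [h1]
      · have hb0 : b (.inr ⟨i', j', k'⟩) ≠ 0 := fun h => ha (by rw [h]; ring)
        have hw : ww S (vI S i j) (.inr ⟨i', j', k'⟩) ≠ 0 := fun h => ha (by rw [h]; ring)
        have h2 : ¬ (¬ Iirr S i' ∧ i.1 = 0 ∧ (j' : ℕ) = 0 ∧ (k' : ℕ) = 0) := by
          rintro ⟨h3, h4, _, h6⟩
          exact hb0 (hr h4 ⟨i', j', k'⟩ h3 h6)
        simp only [ww, vI, arr, cr, if_neg h2] at hw ha ⊢
        by_cases h3 : i' = i.1 ∧ (j' : ℕ) = (j : ℕ) ∧ (k' : ℕ) = 0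
        · rw [if_pos h3]
          refine ⟨by simp, Or.inl ?_⟩
          obtain ⟨h4, h5, h6⟩ := h3
          subst h4
          have h5' : j' = j := Fin.ext h5
          subst h5'
          have h7 : 0 < S.e i.1 j' - 1 := by have := k'.2; omega
          simp only [legV, dif_pos h7]
          have : k' = ⟨0, h7⟩ := Fin.ext h6
          rw [this]
        · rw [if_neg h3] at hw
          simp at hw
    have h1 : (none : Option (V S)).elim 0 b = 0 := rfl
    have h2 : B 0 = b (vI S i j) := rfl
    have h3 : B 1 = (legV S i j 1).elim 0 b := rfl
    unfold cc at hc
    rw [h2, h3]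
    linarith
  have hstep : ∀ k, k < S.e i.1 j - 1 → 2 * B (k+1) ≤ B k + B (k+2) := by
    intro k hk
    have key : ∑ a, ww S (.inr ⟨i.1, j, ⟨k, hk⟩⟩) a * b a ≤
        (legV S i j k).elim 0 b + (legV S i j (k+2)).elim 0 b := by
      refine sum_le_two b _ hb _ _ ?_
      intro a ha
      rcases a with ⟨i', j'⟩ | ⟨i', j', k'⟩
      · have h2 : ¬ (¬ Iirr S i.1 ∧ i'.1 = 0 ∧ (j : ℕ) = 0 ∧ k = 0) := fun h => h.1 i.2
        simp only [ww, arr, cr, if_neg h2] at ha ⊢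
        by_cases h3 : i.1 = i'.1 ∧ (j : ℕ) = (j' : ℕ) ∧ k = 0
        · rw [if_pos h3]
          refine ⟨by simp, Or.inl ?_⟩
          obtain ⟨h4, h5, h6⟩ := h3
          have h4' : i = i' := Subtype.ext h4
          subst h4'
          have h5' : j = j' := Fin.ext h5
          subst h5' h6
          rfl
        · rw [if_neg h3] at ha
          simp at ha
      · by_cases h1 : i.1 = i'
        · subst h1
          by_cases h2 : (j : ℕ) = j'
          · have h2' : j = j' := Fin.ext h2
            subst h2'
            by_cases h3 : k = (k' : ℕ) + 1
            · have h4 : ¬ ((k' : ℕ) = k + 1) := by omega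
              simp only [ww, arr, cr]
              refine ⟨by rw [if_pos ⟨trivial, trivial, h3⟩, if_neg (fun h => h4 h.2.2)]; simp, Or.inl ?_⟩
              subst h3
              simp [legV]
            · by_cases h4 : (k' : ℕ) = k + 1
              · simp only [ww, arr, cr]
                refine ⟨by rw [if_neg (fun h => h3 h.2.2), if_pos ⟨trivial, trivial, h4⟩]; simp, Or.inr ?_⟩
                have h5 : k + 1 < S.e i.1 j - 1 := by have := k'.2; omega
                have h6 : k' = ⟨k+1, h5⟩ := Fin.ext h4
                simp [legV, h5, h6]
              · exfalso
                simp [ww, arr, cr, h3, h4] at ha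
          · exfalso
            have h2' : ¬ (j' : ℕ) = j := fun h => h2 h.symm
            simp [ww, arr, cr, h2, h2'] at ha
        · exfalso
          have h1' : ¬ i' = i.1 := fun h => h1 h.symm
          simp [ww, arr, cr, h1, h1'] at ha
    have h1 := hleg ⟨i.1, j, ⟨k, hk⟩⟩
    have h2 : B (k+1) = b (.inr ⟨i.1, j, ⟨k, hk⟩⟩) := by
      simp [hB, legV, hk]
    unfold cc at h1
    rw [h2]
    change _ ≤ (legV S i j k).elim 0 b + (legV S i j (k+2)).elim 0 b
    linarith
  have hB0 : 0 < B 0 := hpos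
  have hinc : ∀ k, k ≤ S.e i.1 j - 1 → B k < B (k+1) := by
    intro k
    induction k with
    | zero => intro _; simp only [zero_add]; linarith
    | succ k ih =>
      intro hk
      have h1 := ih (by omega)
      have h2 := hstep k (by omega)
      have h3 : k + 1 + 1 = k + 2 := rfl
      rw [h3]
      linarith
  have h1 := hinc _ le_rfl
  have h2 : B (S.e i.1 j - 1 + 1) = 0 := by simp [hB, legV]
  have h3 := hBn (S.e i.1 j - 1)
  linarith

theorem inL_epsJ (S : Setup) (I : ∀ i : Fin (S.p+1), Fin (S.m i)) : inL S (epsJ S I) := by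
  intro i _
  simp only [v0, vI, epsJ]
  have h : ∀ i : Fin (S.p+1), ∑ j : Fin (S.m i), (if (j : ℕ) = (I i : ℕ) then (1:ℤ) else 0) = 1 := by
    intro i
    rw [Finset.sum_eq_single (I i)]
    · simp
    · intro j _ hj
      rw [if_neg (fun h => hj (Fin.ext h))]
    · simp
  rw [h]; exact h 0

theorem NN_epsJ (S : Setup) (I : ∀ i : Fin (S.p+1), Fin (S.m i)) :
    NN S (i0 S) (toR S (epsJ S I)) = 1 := by
  unfold NN
  rw [Finset.sum_eq_single (I (i0 S).1)]
  · simp [toR, vI, epsJ]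
  · intro j _ hj
    have : ¬ ((j : ℕ) = (I (i0 S).1 : ℕ)) := fun h => hj (Fin.ext h)
    simp [toR, vI, epsJ, this]
  · simp

theorem sum_epsJ (S : Setup) (I : ∀ i : Fin (S.p+1), Fin (S.m i)) (g : V S → ℝ) :
    ∑ a, g a * toR S (epsJ S I) a = ∑ i, g (vI S i (I i.1)) := by
  simp only [Fintype.sum_sum_type, Fintype.sum_sigma]
  have : ∑ v : Fin (S.p+1), ∑ w, g (.inr ⟨v, w⟩) * toR S (epsJ S I) (.inr ⟨v, w⟩) = 0 := by
    refine Finset.sum_eq_zero fun v _ => Finset.sum_eq_zero fun w _ => ?_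
    simp [toR, epsJ]
  simp only [Fintype.sum_sigma] at this
  rw [this, add_zero]
  refine Finset.sum_congr rfl fun i _ => ?_
  rw [Finset.sum_eq_single (I i.1)]
  · simp [toR, epsJ, vI]
  · intro j _ hj
    have : ¬ ((j : ℕ) = (I i.1 : ℕ)) := fun h => hj (Fin.ext h)
    simp [toR, epsJ, this]
  · simp

theorem inL_epsr (S : Setup) (v : Vr S) : inL S (eps S (.inr v)) := by
  intro i _
  simp [v0, vI, eps]

theorem kI_eq (S : Setup) : kI S = (Fintype.card {i : Fin (S.p+1) // Iirr S i} : ℝ) - 1 := by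
  have h : ∀ i : {i : Fin (S.p+1) // Iirr S i}, (if i.1 ≠ 0 then (1:ℝ) else 0)
      = 1 - if i = i0 S then 1 else 0 := by
    intro i
    by_cases hi : i = i0 S
    · subst hi; simp [i0]
    · have : i.1 ≠ 0 := fun h => hi (Subtype.ext h)
      simp [hi, this]
  unfold kI
  rw [Finset.sum_congr rfl fun i _ => h i, Finset.sum_sub_distrib]
  simp

theorem pair_neg (S : Setup) (β : V S → ℤ) (hβ : quasiFund S β) (hq : qform S β < 0)
    (x y : V S → ℤ) (hx : inLpos S x) (hy : inLpos S y) (hx0 : x ≠ 0) (hy0 : y ≠ 0)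
    (hxy : β = x + y) : bform S x y < 0 := by
  classical
  obtain ⟨hL, hβ0, -, hI, hR, hconn⟩ := hβ
  by_contra hcon
  have hcon' : (0:ℝ) ≤ (bform S x y : ℝ) := by exact_mod_cast not_lt.1 hcon
  obtain ⟨b, hbdef⟩ : ∃ b, b = toR S β := ⟨_, rfl⟩
  have hb : ∀ a, 0 ≤ b a := by
    intro a; rw [hbdef]; unfold toR; exact_mod_cast hβ0 a
  have hbadd : ∀ a, b a = toR S x a + toR S y a := by
    intro a; rw [hbdef, hxy]; simp [toR]
  have hxn : ∀ a, 0 ≤ toR S x a := by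
    intro a; unfold toR; exact_mod_cast hx.2 a
  have hyn : ∀ a, 0 ≤ toR S y a := by
    intro a; unfold toR; exact_mod_cast hy.2 a
  obtain ⟨f, hf⟩ : ∃ f : V S → ℝ, ∀ a, f a = toR S x a / b a := ⟨_, fun _ => rfl⟩
  have hfx : ∀ a, toR S x a = b a * f a := by
    intro a
    rcases (hb a).eq_or_lt with h | h
    · have h1 := hbadd a; have h2 := hxn a; have h3 := hyn a
      have : toR S x a = 0 := by linarith
      rw [this, ← h]; ring
    · rw [hf]; field_simp
  have hfy : ∀ a, toR S y a = b a * (1 - f a) := by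
    intro a
    have := hfx a; have h1 := hbadd a; linarith
  have hf0 : ∀ a, 0 ≤ f a := fun a => by rw [hf]; exact div_nonneg (hxn a) (hb a)
  have hf1 : ∀ a, f a ≤ 1 := fun a => by
    rw [hf]; exact div_le_one_of_le₀ (by linarith [hbadd a, hyn a]) (hb a)
  have hff : ∀ a, 0 ≤ f a * (1 - f a) := fun a => mul_nonneg (hf0 a) (by linarith [hf1 a])
  have hbff : ∀ a, 0 ≤ b a * (f a * (1 - f a)) := fun a => mul_nonneg (hb a) (hff a)
  obtain ⟨n, hn⟩ : ∃ n, n = NN S (i0 S) b := ⟨_, rfl⟩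
  obtain ⟨N, hN⟩ : ∃ N, N = NN S (i0 S) (toR S x) := ⟨_, rfl⟩
  obtain ⟨N', hN'⟩ : ∃ N', N' = NN S (i0 S) (toR S y) := ⟨_, rfl⟩
  have hni : ∀ i, ∑ j, b (vI S i j) = n := by
    intro i; rw [hn, hbdef]; exact NN_of_inL S β hL i
  have hNi : ∀ i, ∑ j, b (vI S i j) * f (vI S i j) = N := by
    intro i; rw [hN, ← NN_of_inL S x hx.1 i]
    exact Finset.sum_congr rfl fun j _ => (hfx _).symm
  have hNi' : ∀ i, ∑ j, b (vI S i j) * (1 - f (vI S i j)) = N' := by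
    intro i; rw [hN', ← NN_of_inL S y hy.1 i]
    exact Finset.sum_congr rfl fun j _ => (hfy _).symm
  have hnN : n = N + N' := by
    rw [← hni (i0 S), ← hNi (i0 S), ← hNi' (i0 S), ← Finset.sum_add_distrib]
    exact Finset.sum_congr rfl fun j _ => by ring
  have hN0 : 0 ≤ N := by
    rw [← hNi (i0 S)]; exact Finset.sum_nonneg fun j _ => mul_nonneg (hb _) (hf0 _)
  have hN0' : 0 ≤ N' := by
    rw [← hNi' (i0 S)]
    exact Finset.sum_nonneg fun j _ => mul_nonneg (hb _) (by linarith [hf1 (vI S (i0 S) j)])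
  have hn0 : 0 ≤ n := by linarith
  have hbn : ∀ i j, b (vI S i j) ≤ n := by
    intro i j; rw [← hni i]
    exact Finset.single_le_sum (f := fun j => b (vI S i j)) (fun j _ => hb _) (Finset.mem_univ j)
  -- the leg vertices
  have hleg : ∀ v : Vr S, cc S b (.inr v) ≤ 0 := by
    rintro ⟨i, j, k⟩
    have h1 : (bform S β (eps S (.inr ⟨i, j, k⟩)) : ℝ) ≤ 0 := by exact_mod_cast hR i j k
    rw [bform_L S β _ hL (inL_epsr S _), ← hbdef] at h1
    have h2 : NN S (i0 S) (toR S (eps S (.inr ⟨i, j, k⟩))) = 0 := by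
      unfold NN; refine Finset.sum_eq_zero fun j _ => ?_
      simp [toR, eps, vI]
    rw [h2] at h1
    have h3 : ∑ a, cc S b a * toR S (eps S (.inr ⟨i, j, k⟩)) a = cc S b (.inr ⟨i, j, k⟩) := by
      rw [Finset.sum_eq_single (.inr ⟨i, j, k⟩)]
      · simp [toR, eps]
      · intro a _ ha
        simp only [toR, eps, if_neg ha]; simp
      · simp
    rw [h3] at h1
    linarith
  -- the form on the pair
  have hE : (bform S x y : ℝ) = ∑ a, cc S b a * (b a * (f a * (1 - f a)))
      - (∑ a, ∑ a', ww S a a' * (b a * b a') * (f a - f a') ^ 2) / 2 - 2 * kI S * N * N' := by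
    have hk := kac_identity (ww S) (ww_symm S) b f
    have h1 : ∑ a, cc S (toR S x) a * toR S y a =
        ∑ a, (2 * (b a * f a) - ∑ c, ww S a c * (b c * f c)) * (b a * (1 - f a)) := by
      refine Finset.sum_congr rfl fun a _ => ?_
      unfold cc
      rw [hfx a, hfy a]
      congr 2
      exact Finset.sum_congr rfl fun c _ => by rw [hfx c]
    rw [bform_L S x y hx.1 hy.1, ← hN, ← hN', h1, hk]
    rfl
  have hsplit : ∀ g : V S → ℝ, ∑ a, g a = (∑ i, ∑ j, g (vI S i j)) + ∑ v : Vr S, g (.inr v) := by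
    intro g
    rw [Fintype.sum_sum_type, Fintype.sum_sigma]; rfl
  have hQ : ∑ i, ∑ j, cc S b (vI S i j) * b (vI S i j) + ∑ v : Vr S, cc S b (.inr v) * b (.inr v)
      - 2 * kI S * n * n < 0 := by
    rw [← hsplit (fun a => cc S b a * b a)]
    have h1 := bform_L S β β hL hL
    rw [← hbdef, ← hn] at h1
    rw [← h1]
    have : bform S β β < 0 := by unfold bform; unfold qform at hq; linarith
    exact_mod_cast this
  -- nonnegative pieces
  obtain ⟨A3, hA3⟩ : ∃ A3, A3 = ∑ v : Vr S,
      (- cc S b (.inr v)) * (b (.inr v) * (f (.inr v) * (1 - f (.inr v)))) := ⟨_, rfl⟩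
  have hA3t : ∀ v : Vr S, 0 ≤
      (- cc S b (.inr v)) * (b (.inr v) * (f (.inr v) * (1 - f (.inr v)))) :=
    fun v => mul_nonneg (by linarith [hleg v]) (hbff _)
  have hA3n : 0 ≤ A3 := by rw [hA3]; exact Finset.sum_nonneg fun v _ => hA3t v
  obtain ⟨A4, hA4⟩ : ∃ A4, A4 = ∑ a, ∑ a', ww S a a' * (b a * b a') * (f a - f a') ^ 2 :=
    ⟨_, rfl⟩
  have hA4t : ∀ a a', 0 ≤ ww S a a' * (b a * b a') * (f a - f a') ^ 2 := fun a a' =>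
    mul_nonneg (mul_nonneg (ww_nonneg S a a') (mul_nonneg (hb a) (hb a'))) (sq_nonneg _)
  have hA4n : 0 ≤ A4 := by
    rw [hA4]; exact Finset.sum_nonneg fun a _ => Finset.sum_nonneg fun a' _ => hA4t a a'
  have hE2 : (bform S x y : ℝ) =
      ∑ i, ∑ j, cc S b (vI S i j) * (b (vI S i j) * (f (vI S i j) * (1 - f (vI S i j))))
      - A3 - A4 / 2 - 2 * kI S * N * N' := by
    rw [hE, hsplit, hA4, hA3]
    have : ∑ v : Vr S, cc S b (.inr v) * (b (.inr v) * (f (.inr v) * (1 - f (.inr v)))) =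
      - ∑ v : Vr S,
      (- cc S b (.inr v)) * (b (.inr v) * (f (.inr v) * (1 - f (.inr v)))) := by
      rw [← Finset.sum_neg_distrib]
      exact Finset.sum_congr rfl fun v _ => by ring
    rw [this]; ring
  have hedge : A4 = 0 → ∀ a a', 0 < ww S a a' → 0 < b a → 0 < b a' → f a = f a' := by
    intro h a a' hw h1 h2
    rw [hA4, Finset.sum_eq_zero_iff_of_nonneg
      (fun a _ => Finset.sum_nonneg fun a' _ => hA4t a a')] at h
    have h3 := h a (Finset.mem_univ _)
    rw [Finset.sum_eq_zero_iff_of_nonneg (fun a' _ => hA4t a a')] at h3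
    have h4 := h3 a' (Finset.mem_univ _)
    have h5 : ww S a a' * (b a * b a') ≠ 0 := by positivity
    have h6 : (f a - f a') ^ 2 = 0 := (mul_eq_zero.1 h4).resolve_left h5
    have := pow_eq_zero_iff (two_ne_zero) |>.1 h6
    linarith
  have hlegz : A3 = 0 → ∀ v : Vr S, cc S b (.inr v) * b (.inr v) < 0 →
      f (.inr v) * (1 - f (.inr v)) = 0 := by
    intro h v hv
    rw [hA3, Finset.sum_eq_zero_iff_of_nonneg (fun v _ => hA3t v)] at h
    have h1 := h v (Finset.mem_univ _)
    have h2 : cc S b (.inr v) * b (.inr v) * (f (.inr v) * (1 - f (.inr v))) = 0 := by linarith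
    exact (mul_eq_zero.1 h2).resolve_left hv.ne
  -- support facts
  have hsupp : ∀ a, a ∈ supp S β ↔ 0 < b a := by
    intro a
    rw [hbdef]
    simp only [supp, toR, Set.mem_setOf_eq, Int.cast_pos]
    have := hβ0 a
    omega
  have hx_of : (∀ a, 0 < b a → f a = 0) → False := by
    intro h
    apply hx0
    funext a
    have h1 : toR S x a = 0 := by
      rw [hfx]
      rcases (hb a).eq_or_lt with h2 | h2
      · rw [← h2]; ring
      · rw [h a h2]; ring
    unfold toR at h1
    exact_mod_cast h1
  have hy_of : (∀ a, 0 < b a → f a = 1) → False := by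
    intro h
    apply hy0
    funext a
    have h1 : toR S y a = 0 := by
      rw [hfy]
      rcases (hb a).eq_or_lt with h2 | h2
      · rw [← h2]; ring
      · rw [h a h2]; ring
    unfold toR at h1
    exact_mod_cast h1
  rcases hn0.eq_or_lt with hnz | hnpos
  · -- `n = 0`
    have hbz : ∀ i j, b (vI S i j) = 0 := fun i j => le_antisymm (by rw [hnz]; exact hbn i j) (hb _)
    have hNz : N = 0 := by linarith
    have h1 : ∑ i, ∑ j, cc S b (vI S i j) * (b (vI S i j) * (f (vI S i j) * (1 - f (vI S i j))))
        = 0 := Finset.sum_eq_zero fun i _ => Finset.sum_eq_zero fun j _ => by rw [hbz]; ring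
    rw [hE2, h1, hNz] at hcon'
    have hA3z : A3 = 0 := by linarith
    have hA4z : A4 = 0 := by linarith
    have h2 : ∑ i, ∑ j, cc S b (vI S i j) * b (vI S i j) = 0 :=
      Finset.sum_eq_zero fun i _ => Finset.sum_eq_zero fun j _ => by rw [hbz]; ring
    rw [h2, ← hnz] at hQ
    have h3 : ∃ v ∈ (Finset.univ : Finset (Vr S)), cc S b (.inr v) * b (.inr v) < 0 := by
      by_contra hno
      push Not at hno
      have := Finset.sum_nonneg hno
      linarith
    obtain ⟨v, -, hv⟩ := h3
    have hvz := hlegz hA3z v hv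
    have hvpos : 0 < b (.inr v) := by
      rcases (hb (.inr v)).eq_or_lt with h | h
      · rw [← h] at hv; simp at hv
      · exact h
    have hconst : ∀ a, 0 < b a → f (.inr v) = f a := by
      intro a ha
      have hpath := hconn (.inr v) ((hsupp _).2 hvpos) a ((hsupp _).2 ha)
      clear ha
      induction hpath with
      | refl => rfl
      | tail hpth hst ih =>
        rename_i a1 a2
        rw [ih]
        obtain ⟨e1, e2, e3⟩ := hst
        have e2' := (hsupp _).1 e2
        rcases a1 with ⟨i, j⟩ | v1
        · exact absurd (hbz i j) e2'.ne'
        · exact hedge hA4z _ _ (leg_edge S v1 a2 e1).1 e2' ((hsupp _).1 e3)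
    rcases mul_eq_zero.1 hvz with h | h
    · exact hx_of fun a ha => by rw [← hconst a ha, h]
    · exact hy_of fun a ha => by rw [← hconst a ha]; linarith
  -- `n > 0`
  have hJ : ∀ i : {i : Fin (S.p+1) // Iirr S i}, ∃ j : Fin (S.m i.1),
      ∀ j', cc S b (vI S i j') ≤ cc S b (vI S i j) := by
    intro i
    haveI : Nonempty (Fin (S.m i.1)) := ⟨⟨0, S.hm i.1⟩⟩
    exact Finite.exists_max _
  choose J hJ using hJ
  obtain ⟨I, hIJ⟩ : ∃ I : ∀ i : Fin (S.p+1), Fin (S.m i),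
      ∀ i : {i : Fin (S.p+1) // Iirr S i}, I i.1 = J i := by
    refine ⟨fun i => if h : Iirr S i then J ⟨i, h⟩ else ⟨0, S.hm i⟩, ?_⟩
    intro i
    simp [i.2]
  obtain ⟨c, hc⟩ : ∃ c : {i : Fin (S.p+1) // Iirr S i} → ℝ, ∀ i, c i = cc S b (vI S i (J i)) :=
    ⟨_, fun _ => rfl⟩
  have hcmax : ∀ i j, cc S b (vI S i j) ≤ c i := fun i j => by rw [hc]; exact hJ i j
  have hc1 : ∑ i, c i ≤ 2 * kI S * n := by
    have h1 : (bform S β (epsJ S I) : ℝ) ≤ 0 := by exact_mod_cast hI I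
    rw [bform_L S β _ hL (inL_epsJ S I), NN_epsJ, ← hbdef, ← hn, sum_epsJ] at h1
    have h2 : ∑ i : {i : Fin (S.p+1) // Iirr S i}, cc S b (vI S i (I i.1)) = ∑ i, c i :=
      Finset.sum_congr rfl fun i _ => by rw [hc, hIJ]
    rw [h2] at h1
    linarith
  have hc2 : ∀ i, c i ≤ 2 * n := by
    intro i
    rw [hc]
    unfold cc
    have h1 : 0 ≤ ∑ a, ww S (vI S i (J i)) a * b a :=
      Finset.sum_nonneg fun a _ => mul_nonneg (ww_nonneg _ _ _) (hb a)
    linarith [hbn i (J i)]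
  obtain ⟨C, hC⟩ : ∃ C : {i : Fin (S.p+1) // Iirr S i} → ℝ, ∀ i, C i = max 0 (c i) :=
    ⟨_, fun _ => rfl⟩
  have hC0 : ∀ i, 0 ≤ C i := fun i => by rw [hC]; exact le_max_left _ _
  have hCc : ∀ i j, cc S b (vI S i j) ≤ C i := fun i j =>
    (hcmax i j).trans (by rw [hC]; exact le_max_right _ _)
  have hCsum : ∑ i, C i ≤ 2 * kI S * n := by
    by_cases h : ∃ i1, c i1 < 0
    · obtain ⟨i1, hi1⟩ := h
      have h1 : ∀ i, C i ≤ 2 * n - if i = i1 then 2 * n else 0 := by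
        intro i
        by_cases hi : i = i1
        · subst hi; rw [hC, max_eq_left hi1.le]; simp
        · rw [if_neg hi, hC, sub_zero]
          exact max_le (by linarith) (hc2 i)
      refine (Finset.sum_le_sum fun i _ => h1 i).trans ?_
      rw [Finset.sum_sub_distrib, kI_eq]
      simp
      linarith
    · push Not at h
      have : ∑ i, C i = ∑ i, c i := Finset.sum_congr rfl fun i _ => by
        rw [hC, max_eq_right (h i)]
      rw [this]; exact hc1
  obtain ⟨SQ, hSQ⟩ : ∃ SQ : {i : Fin (S.p+1) // Iirr S i} → ℝ, ∀ i, SQ i =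
      ∑ j, ∑ j', (b (vI S i j) * b (vI S i j')) * (f (vI S i j) - f (vI S i j')) ^ 2 :=
    ⟨_, fun _ => rfl⟩
  have hSQt : ∀ i j j', 0 ≤
      (b (vI S i j) * b (vI S i j')) * (f (vI S i j) - f (vI S i j')) ^ 2 := fun i j j' =>
    mul_nonneg (mul_nonneg (hb _) (hb _)) (sq_nonneg _)
  have hSQ0 : ∀ i, 0 ≤ SQ i := fun i => by
    rw [hSQ]; exact Finset.sum_nonneg fun j _ => Finset.sum_nonneg fun j' _ => hSQt i j j'
  obtain ⟨G, hG⟩ : ∃ G : {i : Fin (S.p+1) // Iirr S i} → ℝ, ∀ i, G i =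
      ∑ j, (C i - cc S b (vI S i j)) * (b (vI S i j) * (f (vI S i j) * (1 - f (vI S i j)))) :=
    ⟨_, fun _ => rfl⟩
  have hGt : ∀ i j, 0 ≤
      (C i - cc S b (vI S i j)) * (b (vI S i j) * (f (vI S i j) * (1 - f (vI S i j)))) :=
    fun i j => mul_nonneg (by linarith [hCc i j]) (hbff _)
  have hG0 : ∀ i, 0 ≤ G i := fun i => by
    rw [hG]; exact Finset.sum_nonneg fun j _ => hGt i j
  have hT : ∀ i, n * ∑ j, cc S b (vI S i j) *
      (b (vI S i j) * (f (vI S i j) * (1 - f (vI S i j)))) =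
      C i * (N * N') - C i * SQ i / 2 - n * G i := by
    intro i
    have h1 := cs_identity (fun j => b (vI S i j)) (fun j => f (vI S i j))
    beta_reduce at h1
    rw [hni i, hNi i, hNi' i, ← hSQ] at h1
    have h2 : ∑ j, cc S b (vI S i j) * (b (vI S i j) * (f (vI S i j) * (1 - f (vI S i j)))) =
        C i * ∑ j, b (vI S i j) * (f (vI S i j) * (1 - f (vI S i j))) - G i := by
      rw [hG, Finset.mul_sum, ← Finset.sum_sub_distrib]
      exact Finset.sum_congr rfl fun j _ => by ring
    rw [h2]
    linear_combination (C i) * h1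
  have hE3 : n * (bform S x y : ℝ) = -(2 * kI S * n - ∑ i, C i) * (N * N')
      - (∑ i, C i * SQ i) / 2 - n * ∑ i, G i - n * A3 - n * A4 / 2 := by
    rw [hE2]
    have h1 : n * ∑ i, ∑ j, cc S b (vI S i j) *
      (b (vI S i j) * (f (vI S i j) * (1 - f (vI S i j)))) =
      (∑ i, C i) * (N * N') - (∑ i, C i * SQ i) / 2 - n * ∑ i, G i := by
      rw [Finset.mul_sum, Finset.sum_congr rfl fun i _ => hT i, Finset.sum_sub_distrib,
        Finset.sum_sub_distrib, Finset.sum_mul, Finset.mul_sum, Finset.sum_div]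
    linear_combination h1
  have hnb : 0 ≤ n * (bform S x y : ℝ) := mul_nonneg hn0 hcon'
  have p1 : 0 ≤ (2 * kI S * n - ∑ i, C i) * (N * N') :=
    mul_nonneg (by linarith) (mul_nonneg hN0 hN0')
  have p2 : 0 ≤ ∑ i, C i * SQ i := Finset.sum_nonneg fun i _ => mul_nonneg (hC0 i) (hSQ0 i)
  have p3 : 0 ≤ ∑ i, G i := Finset.sum_nonneg fun i _ => hG0 i
  have p3' : 0 ≤ n * ∑ i, G i := mul_nonneg hn0 p3
  have p4 : 0 ≤ n * A3 := mul_nonneg hn0 hA3n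
  have p5 : 0 ≤ n * A4 := mul_nonneg hn0 hA4n
  have z1 : (2 * kI S * n - ∑ i, C i) * (N * N') = 0 := by linarith
  have z2 : ∑ i, C i * SQ i = 0 := by linarith
  have z3 : ∑ i, G i = 0 := by
    have : n * ∑ i, G i = 0 := by linarith
    exact (mul_eq_zero.1 this).resolve_left hnpos.ne'
  have hA3z : A3 = 0 := by
    have : n * A3 = 0 := by linarith
    exact (mul_eq_zero.1 this).resolve_left hnpos.ne'
  have hA4z : A4 = 0 := by
    have : n * A4 = 0 := by linarith
    exact (mul_eq_zero.1 this).resolve_left hnpos.ne'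
  have hedge := hedge hA4z
  have hlegz := hlegz hA3z
  -- some base vertex lies in the support
  have hbase : ∃ j, 0 < b (vI S (i0 S) j) := by
    by_contra hno
    push Not at hno
    have := Finset.sum_nonpos (s := Finset.univ) fun j _ => hno j
    rw [hni] at this
    linarith
  have hK1 : ∀ a, 0 < b a → ∃ i j, 0 < b (vI S i j) ∧ i.1 = level S a ∧ f a = f (vI S i j) := by
    intro a ha
    obtain ⟨j0, hj0⟩ := hbase
    have hpath := hconn a ((hsupp _).2 ha) (vI S (i0 S) j0) ((hsupp _).2 hj0)
    clear ha
    induction hpath using Relation.ReflTransGen.head_induction_on with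
    | refl => exact ⟨i0 S, j0, hj0, rfl, rfl⟩
    | head hst hpth ih =>
      rename_i a1 a2
      obtain ⟨e1, e2, e3⟩ := hst
      have e2' := (hsupp _).1 e2
      rcases a1 with ⟨i, j⟩ | v1
      · exact ⟨i, j, e2', rfl, rfl⟩
      · obtain ⟨i, j, g1, g2, g3⟩ := ih
        have g4 := leg_edge S v1 a2 e1
        exact ⟨i, j, g1, by rw [g2, g4.2], by
          rw [← g3]; exact hedge _ _ g4.1 e2' ((hsupp _).1 e3)⟩
  have hNpos : N ≠ 0 := by
    intro h
    have h1 : ∀ i j, 0 < b (vI S i j) → f (vI S i j) = 0 := by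
      intro i j hj
      have h2 := hNi i
      rw [h, Finset.sum_eq_zero_iff_of_nonneg (fun j _ => mul_nonneg (hb _) (hf0 _))] at h2
      exact (mul_eq_zero.1 (h2 j (Finset.mem_univ _))).resolve_left hj.ne'
    refine hx_of fun a ha => ?_
    obtain ⟨i, j, g1, -, g3⟩ := hK1 a ha
    rw [g3, h1 i j g1]
  have hNpos' : N' ≠ 0 := by
    intro h
    have h1 : ∀ i j, 0 < b (vI S i j) → f (vI S i j) = 1 := by
      intro i j hj
      have h2 := hNi' i
      rw [h, Finset.sum_eq_zero_iff_of_nonneg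
        (fun j _ => mul_nonneg (hb _) (by linarith [hf1 (vI S i j)]))] at h2
      have := (mul_eq_zero.1 (h2 j (Finset.mem_univ _))).resolve_left hj.ne'
      linarith
    refine hy_of fun a ha => ?_
    obtain ⟨i, j, g1, -, g3⟩ := hK1 a ha
    rw [g3, h1 i j g1]
  have hCeq : ∑ i, C i = 2 * kI S * n := by
    have := (mul_eq_zero.1 z1).resolve_right (mul_ne_zero hNpos hNpos')
    linarith
  -- a level on which `f` is constant
  have hfc : ∀ i j, (∀ j', 0 < b (vI S i j') → f (vI S i j') = f (vI S i j)) →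
      N = n * f (vI S i j) := by
    intro i j h
    rw [← hNi i, ← hni i, Finset.sum_mul]
    refine Finset.sum_congr rfl fun j' _ => ?_
    rcases (hb (vI S i j')).eq_or_lt with h2 | h2
    · rw [← h2]; ring
    · rw [h j' h2]
  have hfc' : ∀ i j, (∀ j', 0 < b (vI S i j') → f (vI S i j') = f (vI S i j)) →
      f (vI S i j) * (1 - f (vI S i j)) ≠ 0 := by
    intro i j h h0
    have h1 := hfc i j h
    rcases mul_eq_zero.1 h0 with h2 | h2
    · rw [h2] at h1; exact hNpos (by linarith)
    · have : f (vI S i j) = 1 := by linarith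
      rw [this] at h1
      exact hNpos' (by linarith)
  have hCconst : ∀ i, 0 < C i → ∀ j, 0 < b (vI S i j) →
      ∀ j', 0 < b (vI S i j') → f (vI S i j') = f (vI S i j) := by
    intro i hCi j hj j' hj'
    rw [Finset.sum_eq_zero_iff_of_nonneg (fun i _ => mul_nonneg (hC0 i) (hSQ0 i))] at z2
    have h1 := (mul_eq_zero.1 (z2 i (Finset.mem_univ _))).resolve_left hCi.ne'
    rw [hSQ, Finset.sum_eq_zero_iff_of_nonneg
      (fun j _ => Finset.sum_nonneg fun j' _ => hSQt i j j')] at h1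
    have h2 := h1 j' (Finset.mem_univ _)
    rw [Finset.sum_eq_zero_iff_of_nonneg (fun j _ => hSQt i j' j)] at h2
    have h3 := h2 j (Finset.mem_univ _)
    have h4 : (f (vI S i j') - f (vI S i j)) ^ 2 = 0 :=
      (mul_eq_zero.1 h3).resolve_left (by positivity)
    have := pow_eq_zero_iff (two_ne_zero) |>.1 h4
    linarith
  have hGz : ∀ i j,
      (C i - cc S b (vI S i j)) * (b (vI S i j) * (f (vI S i j) * (1 - f (vI S i j)))) = 0 := by
    intro i j
    rw [Finset.sum_eq_zero_iff_of_nonneg (fun i _ => hG0 i)] at z3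
    have h1 := z3 i (Finset.mem_univ _)
    rw [hG, Finset.sum_eq_zero_iff_of_nonneg (fun j _ => hGt i j)] at h1
    exact h1 j (Finset.mem_univ _)
  have hCs : ∀ i, 0 < C i → ∑ j, cc S b (vI S i j) * b (vI S i j) = C i * n := by
    intro i hCi
    rw [← hni i, Finset.mul_sum]
    refine Finset.sum_congr rfl fun j _ => ?_
    rcases (hb (vI S i j)).eq_or_lt with h2 | h2
    · rw [← h2]; ring
    · have h3 := hGz i j
      have h4 := hfc' i j (hCconst i hCi j h2)
      have h5 : C i - cc S b (vI S i j) = 0 :=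
        (mul_eq_zero.1 h3).resolve_right (mul_ne_zero h2.ne' h4)
      have : cc S b (vI S i j) = C i := by linarith
      rw [this]
  -- a vertex with `f ∈ {0,1}`
  have hspecial : ∃ a, 0 < b a ∧ f a * (1 - f a) = 0 := by
    by_contra hno
    push Not at hno
    have h1 : 0 ≤ ∑ v : Vr S, cc S b (.inr v) * b (.inr v) := by
      refine Finset.sum_nonneg fun v _ => ?_
      by_contra hv
      push Not at hv
      have hvpos : 0 < b (.inr v) := by
        rcases (hb (.inr v)).eq_or_lt with h | h
        · rw [← h] at hv; simp at hv
        · exact h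
      exact hno _ hvpos (hlegz v hv)
    have h2 : ∀ i, C i * n ≤ ∑ j, cc S b (vI S i j) * b (vI S i j) := by
      intro i
      rcases (hC0 i).eq_or_lt with h | h
      · rw [← h, zero_mul]
        refine Finset.sum_nonneg fun j _ => ?_
        rcases (hb (vI S i j)).eq_or_lt with h2 | h2
        · rw [← h2]; simp
        · have h3 := hGz i j
          have h5 : C i - cc S b (vI S i j) = 0 :=
            (mul_eq_zero.1 h3).resolve_right (mul_ne_zero h2.ne' (hno _ h2))
          have : cc S b (vI S i j) = 0 := by linarith
          rw [this]; simp
      · exact (hCs i h).ge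
    have h3 := Finset.sum_le_sum (s := Finset.univ) fun i _ => h2 i
    rw [← Finset.sum_mul, hCeq] at h3
    linarith
  obtain ⟨a, ha, hfa⟩ := hspecial
  obtain ⟨i, j, hj, -, hfj⟩ := hK1 a ha
  rw [hfj] at hfa
  refine hfc' i j ?_ hfa
  rcases (hC0 i).eq_or_lt with hCi | hCi
  swap
  · exact hCconst i hCi j hj
  have hdedge : ∀ j1 j2, 0 < b (vI S i j1) → 0 < b (vI S i j2) → 0 < dcnt S i.1 j1 j2 →
      f (vI S i j1) = f (vI S i j2) := by
    intro j1 j2 h1 h2 hd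
    by_cases h : j1 = j2
    · rw [h]
    · refine hedge _ _ ?_ h1 h2
      rw [ww_level S i j1 j2 h]
      exact_mod_cast hd
  by_cases hD : ∃ j1 j2, 0 < b (vI S i j1) ∧ 0 < b (vI S i j2) ∧ 0 < dcnt S i.1 j1 j2
  · obtain ⟨j1, j2, h1, h2, hd⟩ := hD
    have h12 := hdedge j1 j2 h1 h2 hd
    have hall : ∀ j', 0 < b (vI S i j') → f (vI S i j') = f (vI S i j1) := by
      intro j' hj'
      rcases ultra S i.1 j1 j2 j' hd with h | h
      · exact (hdedge j1 j' h1 hj' h).symm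
      · rw [h12]; exact hdedge j' j2 hj' h2 h
    intro j' hj'
    rw [hall j' hj', hall j hj]
  by_cases hReg : i.1 = 0 ∧ ∃ v : Vr S, ¬ Iirr S v.1 ∧ (v.2.2 : ℕ) = 0 ∧ 0 < b (.inr v)
  · obtain ⟨hi0, ⟨i', l, k⟩, g1, g2, g3⟩ := hReg
    have hl : (l : ℕ) = 0 := by
      have h1 : ¬ 1 < S.m i' := fun h => g1 (Or.inl h)
      have := l.2
      omega
    have hall : ∀ j', 0 < b (vI S i j') → f (.inr ⟨i', l, k⟩) = f (vI S i j') := by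
      intro j' hj'
      refine hedge _ _ (leg_edge S _ _ ?_).1 g3 hj'
      simp only [vI, arr]
      rw [if_pos (⟨g1, hi0, hl, g2⟩ : ¬ Iirr S i' ∧ i.1 = 0 ∧ (l : ℕ) = 0 ∧ (k : ℕ) = 0)]
      omega
    intro j' hj'
    rw [← hall j' hj', ← hall j hj]
  exfalso
  refine leg_contra S b hb hleg i j hj (by rw [hCi]; exact hCc i j) ?_ ?_
  · intro j' hd
    rcases (hb (vI S i j')).eq_or_lt with h2 | h2
    · exact h2.symm
    · exact absurd ⟨j, j', hj, h2, hd⟩ hD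
  · intro hi0 v g1 g2
    rcases (hb (.inr v)).eq_or_lt with h2 | h2
    · exact h2.symm
    · exact absurd ⟨hi0, v, g1, g2, h2⟩ hReg

theorem eform_add_right (S : Setup) (x y z : V S → ℤ) :
    eform S x (y + z) = eform S x y + eform S x z := by
  simp only [eform, Pi.add_apply, mul_add, Finset.sum_add_distrib]; ring

theorem eform_add_left (S : Setup) (x y z : V S → ℤ) :
    eform S (x + y) z = eform S x z + eform S y z := by
  simp only [eform, Pi.add_apply, mul_add, add_mul, Finset.sum_add_distrib]; ring

theorem bform_sum_left (S : Setup) {r : ℕ} (γ : Fin r → (V S → ℤ)) (z : V S → ℤ) :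
    bform S (∑ t, γ t) z = ∑ t, bform S (γ t) z := by
  have h : ∀ s : Finset (Fin r), bform S (∑ t ∈ s, γ t) z = ∑ t ∈ s, bform S (γ t) z := by
    intro s
    induction s using Finset.cons_induction with
    | empty => simp [bform, eform]
    | cons a s ha ih =>
      rw [Finset.sum_cons, Finset.sum_cons, ← ih]
      unfold bform
      rw [eform_add_left, eform_add_right]; ring
  exact h _

theorem inLpos_sum (S : Setup) {r : ℕ} (γ : Fin r → (V S → ℤ)) (s : Finset (Fin r))
    (hγ : ∀ t, inLpos S (γ t)) : inLpos S (∑ t ∈ s, γ t) := by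
  constructor
  · intro i hi
    simp only [Finset.sum_apply]
    rw [Finset.sum_comm, Finset.sum_comm (s := Finset.univ) (t := s)]
    exact Finset.sum_congr rfl fun t _ => (hγ t).1 i hi
  · intro a
    rw [Finset.sum_apply]
    exact Finset.sum_nonneg fun t _ => (hγ t).2 a

/-- Let `β ∈ F̃` with `q(β) < 0`, and suppose `β = γ₁ + ⋯ + γ_r` with `r ≥ 2` and
all `γ_t ∈ L⁺ ∖ {0}`. Then `q(β) < q(γ₁) + ⋯ + q(γ_r)`. -/
theorem statement10 (S : Setup) (β : V S → ℤ) (hβ : quasiFund S β)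
    (hq : qform S β < 0) (r : ℕ) (hr : 2 ≤ r) (γ : Fin r → (V S → ℤ))
    (hγ : ∀ t, inLpos S (γ t) ∧ γ t ≠ 0) (hsum : β = ∑ t, γ t) :
    qform S β < ∑ t, qform S (γ t) := by
  have hpair : ∀ t, bform S (γ t) (∑ s ∈ Finset.univ.erase t, γ s) < 0 := by
    intro t
    refine pair_neg S β hβ hq _ _ (hγ t).1 (inLpos_sum S γ _ fun t => (hγ t).1) (hγ t).2 ?_ ?_
    · intro h0
      haveI : Nontrivial (Fin r) := Fin.nontrivial_iff_two_le.2 hr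
      obtain ⟨s, hs⟩ := exists_ne t
      apply (hγ s).2
      funext a
      have h1 := congrFun h0 a
      rw [Finset.sum_apply, Pi.zero_apply,
        Finset.sum_eq_zero_iff_of_nonneg (fun t _ => (hγ t).1.2 a)] at h1
      exact h1 s (Finset.mem_erase.2 ⟨hs, Finset.mem_univ _⟩)
    · rw [hsum, Finset.add_sum_erase _ _ (Finset.mem_univ t)]
  have h1 : bform S β β = ∑ t, bform S (γ t) β := by
    conv_lhs => rw [hsum]
    rw [bform_sum_left, ← hsum]
  have h2 : ∀ t, bform S (γ t) β < 2 * qform S (γ t) := by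
    intro t
    have h3 : β = γ t + ∑ s ∈ Finset.univ.erase t, γ s := by
      rw [hsum, Finset.add_sum_erase _ _ (Finset.mem_univ t)]
    have h4 := hpair t
    have h5 : bform S (γ t) β = 2 * qform S (γ t)
        + bform S (γ t) (∑ s ∈ Finset.univ.erase t, γ s) := by
      conv_lhs => rw [h3]
      unfold bform qform
      rw [eform_add_right, eform_add_left]; ring
    linarith
  have h6 : 2 * qform S β < 2 * ∑ t, qform S (γ t) := by
    have h7 : 2 * qform S β = bform S β β := by unfold bform qform; ring
    rw [h7, h1, Finset.mul_sum]
    exact Finset.sum_lt_sum_of_nonempty ⟨⟨0, by omega⟩, Finset.mem_univ _⟩ fun t _ => h2 t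
  linarith

end

end DS
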